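/- Let d ≥ 2, κ > 0, and let T₁, T₂ ⊂ ℝ^d be nondegenerate d-simplices with disjoint interiors sharing a common face F = T₁ ∩ T₂, each with shape parameter at most μ; set h := max{diam T₁, diam T₂}, |F| := H^{d−1}(F), and ω_F := int(T₁ ∪ T₂). There exist a constant C > 0 depending only on d and μ and a Lipschitz function φ*_F : ℝ^d → ℝ vanishing identically on ℝ^d ∖ ω_F such that: (i) ∫_F φ*_F dH^{d−1} = 1; (ii) ∫_{T_i} φ*_F · p = 0 for every affine function p : ℝ^d → ℝ and i = 1, 2; and (iii) ‖φ*_F‖_{E,ω_F} := (∫_{ω_F} |∇φ*_F|² + κ² ∫_{ω_F} (φ*_F)²)^{1/2} ≤ C |F|^{−1/2} max{h^{−1}, κ}^{1/2}. -/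

import Mathlib

open MeasureTheory Metric Set
open scoped ENNReal RealInnerProductSpace NNReal Classical

noncomputable section

abbrev Euc (d : ℕ) : Type := EuclideanSpace ℝ (Fin d)

/-- `T(ω)`: Lipschitz functions on `ℝ^d` vanishing identically outside `ω`. -/
def IsTest {d : ℕ} (ω : Set (Euc d)) (φ : Euc d → ℝ) : Prop :=
  (∃ L : ℝ≥0, LipschitzWith L φ) ∧ ∀ x ∉ ω, φ x = 0

/-- `∫_ω |∇φ|²`. -/
def gradSq {d : ℕ} (ω : Set (Euc d)) (φ : Euc d → ℝ) : ℝ :=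
  ∫ x in ω, ‖gradient φ x‖ ^ 2

/-- `∫_ω φ²`. -/
def sqIntg {d : ℕ} (ω : Set (Euc d)) (φ : Euc d → ℝ) : ℝ :=
  ∫ x in ω, (φ x) ^ 2

/-- squared energy norm `‖φ‖_{E,ω}² = ∫_ω |∇φ|² + κ² ∫_ω φ²`. -/
def energySq {d : ℕ} (κ : ℝ) (ω : Set (Euc d)) (φ : Euc d → ℝ) : ℝ :=
  gradSq ω φ + κ ^ 2 * sqIntg ω φ

/-- local dual norm `‖Λ‖_{*,ω} = sup {Λφ : φ ∈ T(ω), ‖φ‖_{E,ω} ≤ 1}`. -/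
def dualNorm {d : ℕ} (κ : ℝ) (ω : Set (Euc d)) (Λ : (Euc d → ℝ) → ℝ) : ℝ≥0∞ :=
  ⨆ φ ∈ {φ : Euc d → ℝ | IsTest ω φ ∧ energySq κ ω φ ≤ 1}, ENNReal.ofReal (Λ φ)

/-- inradius: supremum of radii of balls contained in `s`. -/
def inradius {d : ℕ} (s : Set (Euc d)) : ℝ :=
  sSup {r : ℝ | ∃ c, Metric.ball c r ⊆ s}

/-- the simplex spanned by an affine basis. -/
def simT {d : ℕ} (B : AffineBasis (Fin (d+1)) ℝ (Euc d)) : Set (Euc d) :=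
  convexHull ℝ (Set.range ⇑B)

/-- the face of the simplex opposite to the vertex `z`. -/
def simFace {d : ℕ} (B : AffineBasis (Fin (d+1)) ℝ (Euc d)) (z : Fin (d+1)) : Set (Euc d) :=
  convexHull ℝ (⇑B '' {y | y ≠ z})

/-- the standard `d`-simplex. -/
def Δstd (d : ℕ) : Set (Euc d) := {x | (∀ i, 0 ≤ x i) ∧ ∑ i, x i ≤ 1}

/-- the element bubble of the standard simplex. -/
def elemBubble (d : ℕ) (x : Euc d) : ℝ := (1 - ∑ i, x i) * ∏ i, x i


def q1 (s : ℝ) : ℝ := (1 - s) * (1 - 8 * s + 10 * s ^ 2)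
def gq (t : ℝ) : ℝ := q1 (min |t| 1)
def eta (t : ℝ) : ℝ := max 0 (1 - |t|)

lemma gq_zero : gq 0 = 1 := by simp [gq, q1]
lemma gq_neg (t : ℝ) : gq (-t) = gq t := by simp [gq]
lemma gq_of_ge {t : ℝ} (h : 1 ≤ |t|) : gq t = 0 := by simp [gq, q1, min_eq_right h]
lemma gq_of_mem {t : ℝ} (h0 : 0 ≤ t) (h1 : t ≤ 1) : gq t = q1 t := by
  simp [gq, abs_of_nonneg h0, min_eq_left h1]
lemma gq_abs_le (t : ℝ) : |gq t| ≤ 1 := by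
  have h0 : 0 ≤ min |t| 1 := le_min (abs_nonneg t) zero_le_one
  have h1 : min |t| 1 ≤ 1 := min_le_right _ _
  unfold gq q1
  generalize min |t| 1 = s at *
  rw [abs_le]
  constructor
  · nlinarith [mul_nonneg h0 (sq_nonneg (s - 1)), sq_nonneg (s - 1), sq_nonneg (3 * s - 1), mul_nonneg h0 (sq_nonneg (3*s-1)), mul_nonneg (sub_nonneg.2 h1) (sq_nonneg (3*s-1))]
  · nlinarith [mul_nonneg h0 (sq_nonneg (10 * s - 9))]
lemma gq_lip (t u : ℝ) : |gq t - gq u| ≤ 75 * |t - u| := by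
  have ha : |min |t| 1 - min |u| 1| ≤ |t - u| := by
    refine (abs_min_sub_min_le_max _ _ _ _).trans ?_
    simp
    exact abs_abs_sub_abs_le t u
  have h0 : 0 ≤ min |t| 1 := le_min (abs_nonneg t) zero_le_one
  have h1 : min |t| 1 ≤ 1 := min_le_right _ _
  have h2 : 0 ≤ min |u| 1 := le_min (abs_nonneg u) zero_le_one
  have h3 : min |u| 1 ≤ 1 := min_le_right _ _
  unfold gq q1
  generalize min |t| 1 = s at *
  generalize min |u| 1 = r at *
  have : (1 - s) * (1 - 8 * s + 10 * s ^ 2) - (1 - r) * (1 - 8 * r + 10 * r ^ 2)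
    = (-9 + 18 * (s + r) - 10 * (s^2 + s*r + r^2)) * (s - r) := by ring
  rw [this, abs_mul]
  have : |-9 + 18 * (s + r) - 10 * (s^2 + s*r + r^2)| ≤ 75 := by
    rw [abs_le]; constructor <;> nlinarith [mul_nonneg h0 h2]
  exact mul_le_mul this ha (abs_nonneg _) (by norm_num)
lemma gq_cont : Continuous gq := by unfold gq q1; fun_prop
lemma eta_cont : Continuous eta := by unfold eta; fun_prop
lemma eta_nonneg (t : ℝ) : 0 ≤ eta t := le_max_left _ _
lemma eta_abs_le (t : ℝ) : |eta t| ≤ 1 := by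
  rw [abs_of_nonneg (eta_nonneg t)]; unfold eta; simp
lemma eta_of_ge {t : ℝ} (h : 1 ≤ |t|) : eta t = 0 := by simp [eta, h]
lemma eta_lip (t u : ℝ) : |eta t - eta u| ≤ 75 * |t - u| := by
  unfold eta
  have : |max 0 (1 - |t|) - max 0 (1 - |u|)| ≤ |t - u| := by
    refine (abs_max_sub_max_le_max _ _ _ _).trans ?_
    simp
    rw [abs_sub_comm]
    exact abs_abs_sub_abs_le t u
  linarith [abs_nonneg (t-u)]

lemma int_q1 : ∫ s in (0:ℝ)..1, q1 s = 0 := by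
  rw [intervalIntegral.integral_eq_sub_of_hasDerivAt
    (f := fun s => s - 9/2*s^2 + 6*s^3 - 5/2*s^4)]
  · norm_num
  · intro x _
    have := (((hasDerivAt_id x).sub ((hasDerivAt_pow 2 x).const_mul (9/2))).add
      ((hasDerivAt_pow 3 x).const_mul 6)).sub ((hasDerivAt_pow 4 x).const_mul (5/2))
    refine this.congr_deriv ?_
    simp [q1]; ring
  · apply Continuous.intervalIntegrable; unfold q1; fun_prop
lemma int_sq1 : ∫ s in (0:ℝ)..1, s * q1 s = 0 := by
  rw [intervalIntegral.integral_eq_sub_of_hasDerivAt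
    (f := fun s => 1/2*s^2 - 3*s^3 + 9/2*s^4 - 2*s^5)]
  · norm_num
  · intro x _
    have := ((((hasDerivAt_pow 2 x).const_mul (1/2)).sub ((hasDerivAt_pow 3 x).const_mul 3)).add
      ((hasDerivAt_pow 4 x).const_mul (9/2))).sub ((hasDerivAt_pow 5 x).const_mul 2)
    refine this.congr_deriv ?_
    simp [q1]; ring
  · apply Continuous.intervalIntegrable; unfold q1; fun_prop

lemma int_Ioi_red (f g : ℝ → ℝ) (h1 : ∀ t, 0 ≤ t → t ≤ 1 → f t = g t) (h2 : ∀ t, 1 ≤ t → f t = 0) :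
    ∫ t in Ioi 0, f t = ∫ t in (0:ℝ)..1, g t := by
  rw [intervalIntegral.integral_of_le zero_le_one]
  rw [setIntegral_eq_of_subset_of_forall_sdiff_eq_zero (s := Ioc 0 1) (t := Ioi 0) (f := f)
    measurableSet_Ioi (fun x hx => hx.1)]
  · exact setIntegral_congr_fun measurableSet_Ioc (fun x hx => h1 x hx.1.le hx.2)
  · intro x hx
    apply h2
    by_contra hh
    exact hx.2 ⟨hx.1, (not_le.1 hh).le⟩

lemma int_gq0 : ∫ t in Ioi 0, gq t = 0 := by
  rw [int_Ioi_red gq q1 (fun t h h' => gq_of_mem h h') (fun t h => gq_of_ge (h.trans (le_abs_self t))), int_q1]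
lemma int_gq1 : ∫ t in Ioi 0, t * gq t = 0 := by
  rw [int_Ioi_red (fun t => t * gq t) (fun t => t * q1 t) (fun t h h' => by simp only [gq_of_mem h h'])
    (fun t h => by simp [gq_of_ge (h.trans (le_abs_self t))]), int_sq1]

lemma int_gq0_sc {δ : ℝ} (hδ : 0 < δ) : ∫ t in Ioi 0, gq (t / δ) = 0 := by
  have := integral_comp_mul_left_Ioi gq 0 (inv_pos.2 hδ)
  simp only [mul_zero, int_gq0, smul_zero] at this
  refine Eq.trans ?_ this
  congr 1; ext t; congr 1; field_simp
lemma int_gq1_sc {δ : ℝ} (hδ : 0 < δ) : ∫ t in Ioi 0, t * gq (t / δ) = 0 := by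
  have := integral_comp_mul_left_Ioi (fun t => t * gq t) 0 (inv_pos.2 hδ)
  simp only [mul_zero, int_gq1, smul_zero] at this
  have h2 : ∫ t in Ioi 0, t * gq (t / δ) = δ * ∫ t in Ioi 0, (δ⁻¹ * t) * gq (δ⁻¹ * t) := by
    rw [← integral_const_mul]; congr 1; ext t
    rw [show δ⁻¹ * t = t / δ by field_simp]; field_simp
  rw [h2, this, mul_zero]

/-- one-sided moments vanish -/
lemma int_half0 {δ : ℝ} (hδ : 0 < δ) (S : Set ℝ) (hS : S = Ici 0 ∨ S = Iic 0) :
    ∫ t, S.indicator (fun t => gq (t / δ)) t = 0 := by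
  rcases hS with rfl | rfl
  · rw [integral_indicator measurableSet_Ici, integral_Ici_eq_integral_Ioi, int_gq0_sc hδ]
  · rw [integral_indicator measurableSet_Iic]
    have := integral_comp_neg_Ioi (c := 0) (fun t => gq (t / δ))
    simp only [neg_zero] at this
    rw [← this]
    refine Eq.trans ?_ (int_gq0_sc hδ)
    congr 1; ext t; rw [neg_div, gq_neg]
lemma int_half1 {δ : ℝ} (hδ : 0 < δ) (S : Set ℝ) (hS : S = Ici 0 ∨ S = Iic 0) :
    ∫ t, S.indicator (fun t => gq (t / δ)) t * t = 0 := by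
  have e : ∀ t, S.indicator (fun t => gq (t / δ)) t * t = S.indicator (fun t => t * gq (t / δ)) t := by
    intro t; by_cases h : t ∈ S <;> simp [h, mul_comm]
  simp_rw [e]
  rcases hS with rfl | rfl
  · rw [integral_indicator measurableSet_Ici, integral_Ici_eq_integral_Ioi, int_gq1_sc hδ]
  · rw [integral_indicator measurableSet_Iic]
    have := integral_comp_neg_Ioi (c := 0) (fun t => t * gq (t / δ))
    simp only [neg_zero] at this
    rw [← this]
    have h2 : ∫ t in Ioi 0, -t * gq (-t / δ) = - ∫ t in Ioi 0, t * gq (t / δ) := by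
      rw [← integral_neg]; congr 1; ext t; rw [neg_div, gq_neg]; ring
    rw [h2, int_gq1_sc hδ, neg_zero]
lemma int_eta_sc {ρ : ℝ} (hρ : 0 < ρ) : ∫ t, eta (t / ρ) = ρ := by
  rw [Measure.integral_comp_div eta ρ]
  have : ∫ t, eta t = 1 := by
    have h := integral_comp_abs (f := fun t => max 0 (1 - t))
    unfold eta
    rw [h, int_Ioi_red (fun t => max 0 (1 - t)) (fun t => 1 - t) (fun t _ h => max_eq_right (by linarith))
      (fun t h => max_eq_left (by linarith))]
    rw [intervalIntegral.integral_sub (by simp) (by simp)]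
    norm_num
  rw [this, abs_of_pos hρ]; simp

def fam (m : ℕ) (ρ δ : ℝ) (i : Fin (m+1)) (t : ℝ) : ℝ := if i = 0 then gq (t / δ) else eta (t / ρ)
def wid (m : ℕ) (ρ δ : ℝ) (i : Fin (m+1)) : ℝ := if i = 0 then δ else ρ
def Phi (m : ℕ) (ρ δ : ℝ) (y : Euc (m+1)) : ℝ := ∏ i, fam m ρ δ i (y i)

lemma fam_abs_le (m : ℕ) (ρ δ : ℝ) (i : Fin (m+1)) (t : ℝ) : |fam m ρ δ i t| ≤ 1 := by
  unfold fam; split_ifs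
  · exact gq_abs_le _
  · exact eta_abs_le _
lemma fam_cont (m : ℕ) (ρ δ : ℝ) (i : Fin (m+1)) : Continuous (fam m ρ δ i) := by
  unfold fam; split_ifs
  · exact gq_cont.comp (by fun_prop)
  · exact eta_cont.comp (by fun_prop)
lemma fam_lip (m : ℕ) {ρ δ : ℝ} (hδ : 0 < δ) (hr : δ ≤ ρ) (i : Fin (m+1)) (t u : ℝ) :
    |fam m ρ δ i t - fam m ρ δ i u| ≤ 75 / δ * |t - u| := by
  have hρ : 0 < ρ := hδ.trans_le hr
  unfold fam; split_ifs
  · refine (gq_lip _ _).trans (le_of_eq ?_)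
    rw [← sub_div, abs_div, abs_of_pos hδ]; ring
  · refine (eta_lip _ _).trans ?_
    rw [← sub_div, abs_div, abs_of_pos hρ]
    rw [div_mul_eq_mul_div, ← mul_div_assoc]
    gcongr
lemma fam_zero_of (m : ℕ) {ρ δ : ℝ} (hδ : 0 < δ) (hρ : 0 < ρ) (i : Fin (m+1)) (t : ℝ)
    (h : wid m ρ δ i ≤ |t|) : fam m ρ δ i t = 0 := by
  unfold fam wid at *; split_ifs at *
  · apply gq_of_ge; rwa [abs_div, abs_of_pos hδ, le_div_iff₀ hδ, one_mul]
  · apply eta_of_ge; rwa [abs_div, abs_of_pos hρ, le_div_iff₀ hρ, one_mul]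

lemma prod_diff {ι : Type*} (s : Finset ι) (f g : ι → ℝ) (hf : ∀ i, |f i| ≤ 1) (hg : ∀ i, |g i| ≤ 1) :
    |∏ i ∈ s, f i - ∏ i ∈ s, g i| ≤ ∑ i ∈ s, |f i - g i| := by
  induction s using Finset.induction_on with
  | empty => simp
  | insert a s ha ih =>
    rw [Finset.prod_insert ha, Finset.prod_insert ha, Finset.sum_insert ha]
    have e : f a * ∏ i ∈ s, f i - g a * ∏ i ∈ s, g i
      = (f a - g a) * ∏ i ∈ s, f i + g a * (∏ i ∈ s, f i - ∏ i ∈ s, g i) := by ring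
    rw [e]
    refine (abs_add_le _ _).trans ?_
    rw [abs_mul, abs_mul]
    have h1 : |∏ i ∈ s, f i| ≤ 1 := by
      rw [Finset.abs_prod]; exact Finset.prod_le_one (fun i _ => abs_nonneg _) (fun i _ => hf i)
    gcongr
    · exact mul_le_of_le_one_right (abs_nonneg _) h1
    · exact (mul_le_of_le_one_left (abs_nonneg _) (hg a)).trans ih

lemma Phi_abs_le (m : ℕ) (ρ δ : ℝ) (y : Euc (m+1)) : |Phi m ρ δ y| ≤ 1 := by
  unfold Phi
  rw [Finset.abs_prod]
  exact Finset.prod_le_one (fun i _ => abs_nonneg _) (fun i _ => fam_abs_le _ _ _ _ _)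
lemma Phi_lip (m : ℕ) {ρ δ : ℝ} (hδ : 0 < δ) (hr : δ ≤ ρ) (x y : Euc (m+1)) :
    |Phi m ρ δ x - Phi m ρ δ y| ≤ (m + 1) * (75 / δ) * ‖x - y‖ := by
  unfold Phi
  refine (prod_diff _ _ _ (fun i => fam_abs_le _ _ _ _ _) (fun i => fam_abs_le _ _ _ _ _)).trans ?_
  have : ∀ i ∈ (Finset.univ : Finset (Fin (m+1))),
      |fam m ρ δ i (x i) - fam m ρ δ i (y i)| ≤ 75 / δ * ‖x - y‖ := by
    intro i _
    refine (fam_lip m hδ hr i _ _).trans ?_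
    gcongr
    have := PiLp.norm_apply_le (x - y) i
    simpa using this
  refine (Finset.sum_le_sum this).trans (le_of_eq ?_)
  simp; ring
lemma Phi_zero_of (m : ℕ) {ρ δ : ℝ} (hδ : 0 < δ) (hρ : 0 < ρ) (y : Euc (m+1)) (i : Fin (m+1))
    (h : wid m ρ δ i ≤ |y i|) : Phi m ρ δ y = 0 :=
  Finset.prod_eq_zero (Finset.mem_univ i) (fam_zero_of m hδ hρ i _ h)

lemma int_euc {n : ℕ} (g : Euc n → ℝ) : ∫ y, g y = ∫ u : Fin n → ℝ, g (WithLp.toLp 2 u) :=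
  ((PiLp.volume_preserving_toLp (Fin n)).integral_comp
    (MeasurableEquiv.toLp 2 (Fin n → ℝ)).measurableEmbedding g).symm

lemma int_prod_euc {n : ℕ} (f : Fin n → ℝ → ℝ) : ∫ y : Euc n, ∏ i, f i (y i) = ∏ i, ∫ t, f i t := by
  rw [int_euc]
  exact integral_fintype_prod_volume_eq_prod f

lemma integrable_prod_euc {n : ℕ} (f : Fin n → ℝ → ℝ) (hf : ∀ i, Integrable (f i)) :
    Integrable (fun y : Euc n => ∏ i, f i (y i)) := by
  rw [← (PiLp.volume_preserving_toLp (Fin n)).integrable_comp_emb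
    (MeasurableEquiv.toLp 2 (Fin n → ℝ)).measurableEmbedding]
  exact Integrable.fintype_prod_dep hf

lemma face_int (m : ℕ) {ρ : ℝ} (hρ : 0 < ρ) : ∫ u : Euc m, ∏ i, eta (u i / ρ) = ρ ^ m := by
  rw [int_prod_euc (fun _ t => eta (t / ρ))]
  simp [int_eta_sc hρ]

lemma fam_hcs (m : ℕ) {ρ δ : ℝ} (hδ : 0 < δ) (hρ : 0 < ρ) (i : Fin (m+1)) :
    HasCompactSupport (fam m ρ δ i) := by
  refine HasCompactSupport.intro (K := Icc (-(wid m ρ δ i)) (wid m ρ δ i)) isCompact_Icc ?_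
  intro x hx
  apply fam_zero_of m hδ hρ
  by_contra hh
  exact hx (abs_le.1 (not_le.1 hh).le)

/-- modified family: indicator in the zeroth coordinate, times `t` in coordinate `j`. -/
lemma moment (m : ℕ) {ρ δ : ℝ} (hδ : 0 < δ) (hρ : 0 < ρ) (S : Set ℝ) (hS : S = Ici 0 ∨ S = Iic 0)
    (α : ℝ) (β : Fin (m+1) → ℝ) :
    ∫ y : Euc (m+1), S.indicator 1 (y 0) * Phi m ρ δ y * (α + ∑ j, y j * β j) = 0 := by
  have hSm : MeasurableSet S := by rcases hS with rfl | rfl <;> measurability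
  let F : Fin (m+1) → ℝ → ℝ := fun i t => if i = 0 then S.indicator (fam m ρ δ 0) t else fam m ρ δ i t
  have F0 : ∀ t, F 0 t = S.indicator (fun t => gq (t / δ)) t := fun t => by
    simp [F, fam, Set.indicator]
  have hF : ∀ y : Euc (m+1), S.indicator 1 (y 0) * Phi m ρ δ y = ∏ i, F i (y i) := by
    intro y
    rw [Phi, Fin.prod_univ_succ, Fin.prod_univ_succ, ← mul_assoc]
    congr 1
    · by_cases h : y 0 ∈ S <;> simp [F, h]
  have hFj : ∀ j (y : Euc (m+1)), S.indicator 1 (y 0) * Phi m ρ δ y * y j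
      = ∏ i, (fun t => if i = j then F i t * t else F i t) (y i) := by
    intro j y
    rw [hF]
    simp only
    rw [← Finset.mul_prod_erase _ _ (Finset.mem_univ j), ← Finset.mul_prod_erase _ _ (Finset.mem_univ j)]
    simp only [if_true]
    have hc : (∏ x ∈ Finset.univ.erase j, if x = j then F x (y x) * y x else F x (y x))
        = ∏ x ∈ Finset.univ.erase j, F x (y x) :=
      Finset.prod_congr rfl fun x hx => if_neg (Finset.ne_of_mem_erase hx)
    rw [hc]; ring
  have Fint : ∀ i, Integrable (F i) := by
    intro i
    have h := (fam_cont m ρ δ i).integrable_of_hasCompactSupport (fam_hcs m hδ hρ i) (μ := volume)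
    by_cases hi : i = 0
    · subst hi; simpa [F] using h.indicator hSm
    · simpa [F, hi] using h
  have Fint' : ∀ i, Integrable (fun t => F i t * t) := by
    intro i
    have h := ((fam_cont m ρ δ i).mul continuous_id).integrable_of_hasCompactSupport
      ((fam_hcs m hδ hρ i).mul_right) (μ := volume)
    by_cases hi : i = 0
    · subst hi
      refine (h.indicator hSm).congr (Filter.Eventually.of_forall fun t => ?_)
      by_cases h : t ∈ S <;> simp [F, h]
    · simp only [F, hi, if_false]; exact h
  have i1 : Integrable (fun y : Euc (m+1) => S.indicator 1 (y 0) * Phi m ρ δ y) := by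
    simp_rw [hF]; exact integrable_prod_euc F Fint
  have i2 : ∀ j, Integrable (fun y : Euc (m+1) => S.indicator 1 (y 0) * Phi m ρ δ y * y j) := by
    intro j
    simp_rw [hFj]
    apply integrable_prod_euc (fun i t => if i = j then F i t * t else F i t)
    intro i; split_ifs
    · exact Fint' i
    · exact Fint i
  have z1 : ∫ y : Euc (m+1), S.indicator 1 (y 0) * Phi m ρ δ y = 0 := by
    simp_rw [hF]; rw [int_prod_euc]
    apply Finset.prod_eq_zero (Finset.mem_univ 0)
    simp_rw [F0]; exact int_half0 hδ S hS
  have z2 : ∀ j, ∫ y : Euc (m+1), S.indicator 1 (y 0) * Phi m ρ δ y * y j = 0 := by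
    intro j
    simp_rw [hFj]; rw [int_prod_euc (fun i t => if i = j then F i t * t else F i t)]
    apply Finset.prod_eq_zero (Finset.mem_univ 0)
    by_cases hj : 0 = j
    · simp only [hj, if_true]; rw [← hj]; simp_rw [F0]; exact int_half1 hδ S hS
    · simp only [hj, if_false]
      simp_rw [F0]; exact int_half0 hδ S hS
  have e : ∀ y : Euc (m+1), S.indicator 1 (y 0) * Phi m ρ δ y * (α + ∑ j, y j * β j)
     = S.indicator 1 (y 0) * Phi m ρ δ y * α + ∑ j, (S.indicator 1 (y 0) * Phi m ρ δ y * y j) * β j := by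
    intro y; rw [mul_add, Finset.mul_sum]; congr 1; apply Finset.sum_congr rfl; intros; ring
  simp_rw [e]
  rw [integral_add (i1.mul_const _) (integrable_finsetSum _ fun j _ => (i2 j).mul_const _),
    integral_finsetSum _ fun j _ => (i2 j).mul_const _]
  simp_rw [integral_mul_const, z1, z2]
  simp

def bx (m : ℕ) (ρ δ : ℝ) : Set (Euc (m+1)) := {y | ∀ i, |y i| ≤ wid m ρ δ i}
lemma bx_closed (m : ℕ) (ρ δ : ℝ) : IsClosed (bx m ρ δ) := by
  unfold bx
  simp only [Set.ofPred_forall]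
  exact isClosed_iInter fun i => isClosed_le (by fun_prop) continuous_const
lemma bx_vol (m : ℕ) {ρ δ : ℝ} (hδ : 0 < δ) (hρ : 0 < ρ) :
    volume (bx m ρ δ) = ENNReal.ofReal (2 * δ * (2 * ρ) ^ m) := by
  rw [← (PiLp.volume_preserving_toLp (Fin (m+1))).measure_preimage
    (bx_closed m ρ δ).measurableSet.nullMeasurableSet]
  have : (WithLp.toLp 2) ⁻¹' (bx m ρ δ) = Set.univ.pi fun i => Icc (-(wid m ρ δ i)) (wid m ρ δ i) := by
    ext u; simp [bx, abs_le, Pi.le_def, forall_and]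
  rw [this, volume_pi_pi, Fin.prod_univ_succ]
  simp only [Real.volume_Icc, wid]
  simp
  rw [ENNReal.ofReal_mul (by positivity), ENNReal.ofReal_pow (by positivity)]
  congr 2
  · ring_nf
  · ring_nf

lemma energy_le {n : ℕ} (κ : ℝ) (φ : Euc n → ℝ) (L : ℝ≥0) (M V : ℝ) (hL : LipschitzWith L φ)
    (hM : ∀ x, |φ x| ≤ M) (K : Set (Euc n)) (hK : IsClosed K) (hV : volume K ≤ ENNReal.ofReal V)
    (hV0 : 0 ≤ V) (h0 : ∀ x ∉ K, φ x = 0) (ω : Set (Euc n)) :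
    energySq κ ω φ ≤ (L:ℝ) ^ 2 * V + κ ^ 2 * (M ^ 2 * V) := by
  have key : ∀ (f : Euc n → ℝ) (A : ℝ), 0 ≤ A → (∀ x, 0 ≤ f x) → (∀ x, f x ≤ A) → (∀ x ∉ K, f x = 0) →
      ∫ x in ω, f x ≤ A * V := by
    intro f A hA hf hfA hfK
    have hfin : volume K < ⊤ := hV.trans_lt ENNReal.ofReal_lt_top
    have hi : Integrable (K.indicator fun _ : Euc n => A) volume :=
      (integrable_indicator_iff hK.measurableSet).2 (integrableOn_const hfin.ne)
    have h1 : ∫ x in ω, f x ≤ ∫ x in ω, K.indicator (fun _ => A) x := by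
      refine integral_mono_of_nonneg (Filter.Eventually.of_forall hf) hi.restrict
        (Filter.Eventually.of_forall fun x => ?_)
      by_cases hx : x ∈ K
      · simpa [hx] using hfA x
      · simp [hx, hfK x hx]
    have h2 : ∫ x in ω, K.indicator (fun _ => A) x ≤ ∫ x, K.indicator (fun _ => A) x :=
      setIntegral_le_integral hi (Filter.Eventually.of_forall fun x => Set.indicator_nonneg (fun _ _ => hA) x)
    refine h1.trans (h2.trans ?_)
    rw [integral_indicator hK.measurableSet, setIntegral_const, smul_eq_mul, mul_comm]
    gcongr
    exact ENNReal.toReal_le_of_le_ofReal hV0 hV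
  unfold energySq gradSq sqIntg
  have hg : ∀ x, ‖gradient φ x‖ = ‖fderiv ℝ φ x‖ := fun x => by
    unfold gradient; exact LinearIsometryEquiv.norm_map _ _
  have hM0 : 0 ≤ M := (abs_nonneg _).trans (hM 0)
  gcongr
  · refine key _ _ (by positivity) (fun x => by positivity) (fun x => ?_) (fun x hx => ?_)
    · rw [hg]
      gcongr
      exact norm_fderiv_le_of_lipschitz ℝ hL
    · rw [hg]
      have : φ =ᶠ[nhds x] fun _ => 0 := by
        filter_upwards [hK.isOpen_compl.mem_nhds hx] with y hy using h0 y hy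
      rw [this.fderiv_eq]; simp
  · refine key _ _ (by positivity) (fun x => by positivity) (fun x => ?_) (fun x hx => by simp [h0 x hx])
    rw [← sq_abs]
    have := hM x
    gcongr

section coords
variable {m : ℕ} (b : OrthonormalBasis (Fin (m+1)) ℝ (Euc (m+1))) (c : Euc (m+1))

def jmap (u : Euc m) : Euc (m+1) := c + b.repr.symm (WithLp.toLp 2 (Fin.cons 0 u))

lemma jmap_coord (u : Euc m) : b.repr (jmap b c u - c) = WithLp.toLp 2 (Fin.cons 0 u) := by
  simp [jmap]
lemma jmap_isom : Isometry (jmap b c) := by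
  refine Isometry.of_dist_eq fun u v => ?_
  rw [jmap, jmap, dist_add_left, LinearIsometryEquiv.dist_map, EuclideanSpace.dist_eq, EuclideanSpace.dist_eq,
    Fin.sum_univ_succ]
  simp
lemma jmap_range : range (jmap b c) = {x | ⟪b 0, x - c⟫ = 0} := by
  ext x
  constructor
  · rintro ⟨u, rfl⟩
    have := congrArg (fun y : Euc (m+1) => y 0) (jmap_coord b c u)
    simp only [OrthonormalBasis.repr_apply_apply] at this
    exact this
  · intro hx
    refine ⟨WithLp.toLp 2 (fun i => b.repr (x - c) i.succ), ?_⟩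
    have : (WithLp.toLp 2 (Fin.cons 0 (fun i => b.repr (x - c) (Fin.succ i))) : Euc (m+1)) = b.repr (x - c) := by
      ext i
      refine Fin.cases ?_ (fun i => ?_) i
      · have h : ⟪b 0, x - c⟫ = 0 := hx
        simp only [Fin.cons_zero]
        rw [OrthonormalBasis.repr_apply_apply]; exact h.symm
      · simp
    rw [jmap]
    simp only
    rw [this]; simp

lemma hyper_meas_le (h : ℝ) (hh : 0 ≤ h) (s : Set (Euc (m+1))) (hs : s ⊆ {x | ⟪b 0, x - c⟫ = 0})
    (hs2 : s ⊆ closedBall c h) :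
    μH[(m:ℝ)] s ≤ ENNReal.ofReal (h ^ m) * (μH[(m:ℝ)] (ball (0 : Euc m) 1)) := by
  have h1 : s ⊆ jmap b c '' closedBall 0 h := by
    intro x hx
    have := hs hx
    rw [← jmap_range b c] at this
    obtain ⟨u, rfl⟩ := this
    refine ⟨u, ?_, rfl⟩
    have h2 := hs2 hx
    have h3 : jmap b c 0 = c := by
      have : (WithLp.toLp 2 (Fin.cons 0 (0 : Euc m)) : Euc (m+1)) = 0 := by
        ext i; refine Fin.cases ?_ (fun i => ?_) i <;> simp
      rw [jmap, this]; simp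
    rw [mem_closedBall] at h2 ⊢
    rw [← (jmap_isom b c).dist_eq, h3]; exact h2
  refine (measure_mono h1).trans ?_
  rw [(jmap_isom b c).hausdorffMeasure_image (Or.inl (Nat.cast_nonneg m)), Measure.addHaar_closedBall _ _ hh]
  simp

lemma hyper_int (f : Euc (m+1) → ℝ) :
    ∫ x in {x | ⟪b 0, x - c⟫ = 0}, f x ∂(μH[(m:ℝ)]) = ∫ u : Euc m, f (jmap b c u) ∂(μH[(m:ℝ)]) := by
  rw [← jmap_range b c, ← (jmap_isom b c).map_hausdorffMeasure (Or.inl (Nat.cast_nonneg m)),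
    (jmap_isom b c).isClosedEmbedding.measurableEmbedding.integral_map]

lemma int_coord (g : Euc (m+1) → ℝ) : ∫ x, g (b.repr (x - c)) = ∫ y, g y := by
  rw [integral_sub_right_eq_self (fun x => g (b.repr x)) c]
  exact b.measurePreserving_repr.integral_comp b.repr.toHomeomorph.measurableEmbedding g

lemma affine_coord (p : Euc (m+1) →ᵃ[ℝ] ℝ) (x : Euc (m+1)) :
    p x = p c + ∑ j, b.repr (x - c) j * p.linear (b j) := by
  have h : p x = p.linear (x - c) + p c := by
    have := p.map_vadd c (x - c)
    simpa using this
  rw [h, add_comm]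
  congr 1
  conv_lhs => rw [← b.sum_repr (x - c)]
  simp
end coords

lemma analytic (m : ℕ) : ∃ C0 : ℝ, 0 < C0 ∧ ∀ κ : ℝ, 0 < κ → ∀ R : ℝ, 0 < R → ∀ c : Euc (m+1),
    ∀ b : OrthonormalBasis (Fin (m+1)) ℝ (Euc (m+1)), ∃ φ : Euc (m+1) → ℝ,
      (∃ L : ℝ≥0, LipschitzWith L φ) ∧ (∀ x, x ∉ ball c R → φ x = 0) ∧
      (∫ x in {x | ⟪b 0, x - c⟫ = 0}, φ x ∂(μH[(m:ℝ)])) = 1 ∧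
      (∀ S : Set ℝ, (S = Ici 0 ∨ S = Iic 0) → ∀ p : Euc (m+1) →ᵃ[ℝ] ℝ,
        ∫ x, S.indicator 1 ⟪b 0, x - c⟫ * φ x * p x = 0) ∧
      ∀ ω, energySq κ ω φ ≤ C0 * (R ^ m)⁻¹ * max R⁻¹ κ := by
  obtain ⟨k, hk, hkm⟩ : ∃ k : ℝ≥0, 0 < k ∧ (μH[(m:ℝ)] : Measure (Euc m)) = k • volume :=
    ⟨_, Measure.addHaarScalarFactor_pos_of_isAddHaarMeasure _ _,
      Measure.isAddLeftInvariant_eq_smul (μH[(m:ℝ)] : Measure (Euc m)) volume⟩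
  have hk' : (0:ℝ) < k := hk
  set N : ℝ := 2 * (m + 1) with hN
  have hN1 : 1 ≤ N := by rw [hN]; have : (0:ℝ) ≤ m := Nat.cast_nonneg m; linarith
  have hN0 : 0 < N := by linarith
  set K : ℝ := ((m + 1) * 75) ^ 2 + 1 with hKd
  have hK0 : 0 < K := by positivity
  refine ⟨((k:ℝ)⁻¹) ^ 2 * (2 * 2 ^ m) * K * (N ^ m * N), by positivity, ?_⟩
  intro κ hκ R hR c b
  set ρ : ℝ := R / N with hρd
  have hρ : 0 < ρ := by positivity
  set δ : ℝ := min ρ κ⁻¹ with hδd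
  have hδ : 0 < δ := lt_min hρ (by positivity)
  have hδρ : δ ≤ ρ := min_le_left _ _
  have hδκ : κ ≤ δ⁻¹ := by
    rw [le_inv_comm₀ hκ hδ]; exact min_le_right _ _
  set a : ℝ := (k * ρ ^ m)⁻¹ with ha
  have ha0 : 0 < a := by positivity
  let φ : Euc (m+1) → ℝ := fun x => a * Phi m ρ δ (b.repr (x - c))
  have hlip : LipschitzWith (Real.toNNReal (a * ((m + 1) * (75 / δ)))) φ := by
    refine LipschitzWith.of_dist_le_mul fun x y => ?_
    rw [Real.coe_toNNReal _ (by positivity), Real.dist_eq]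
    show |a * _ - a * _| ≤ _
    rw [← mul_sub, abs_mul, abs_of_pos ha0, mul_assoc]
    gcongr
    refine (Phi_lip m hδ hδρ _ _).trans (le_of_eq ?_)
    rw [← map_sub, LinearIsometryEquiv.norm_map, dist_eq_norm]
    congr 2; abel
  have hwid : ∀ i, wid m ρ δ i ≤ ρ := by
    intro i; unfold wid; split_ifs
    · exact hδρ
    · exact le_rfl
  refine ⟨φ, ⟨_, hlip⟩, ?_, ?_, ?_, ?_⟩
  · intro x hx
    have hx' : R ≤ ‖x - c‖ := by simpa [dist_eq_norm] using hx
    have : ∃ i, wid m ρ δ i ≤ |b.repr (x - c) i| := by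
      by_contra hh
      push Not at hh
      have h1 : ‖b.repr (x - c)‖ ≤ ∑ i, ‖b.repr (x - c) i‖ := by
        have := norm_sum_le Finset.univ (fun i => b.repr (x - c) i • b i)
        rw [b.sum_repr] at this
        rw [LinearIsometryEquiv.norm_map]
        simpa only [norm_smul, b.norm_eq_one, mul_one] using this
      have h2 : ∑ i, ‖b.repr (x - c) i‖ ≤ ∑ i : Fin (m+1), ρ :=
        Finset.sum_le_sum fun i _ => (hh i).le.trans (hwid i)
      rw [LinearIsometryEquiv.norm_map] at h1
      have h3 : ∑ i : Fin (m+1), ρ = R / 2 := by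
        simp; rw [hρd, hN]; field_simp
      linarith
    obtain ⟨i, hi⟩ := this
    show a * _ = 0
    rw [Phi_zero_of m hδ hρ _ i hi, mul_zero]
  · rw [hyper_int]
    have : ∀ u : Euc m, φ (jmap b c u) = a * ∏ i, eta (u i / ρ) := by
      intro u
      show a * _ = _
      rw [jmap_coord, Phi, Fin.prod_univ_succ]
      simp [fam, gq_zero]
    simp_rw [this]
    rw [hkm, integral_const_mul]
    rw [integral_smul_nnreal_measure, face_int m hρ, NNReal.smul_def, smul_eq_mul, ha]
    field_simp
  · intro S hS p
    have : ∀ x, S.indicator 1 ⟪b 0, x - c⟫ * φ x * p x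
        = a * ((fun y : Euc (m+1) => S.indicator 1 (y 0) * Phi m ρ δ y * (p c + ∑ j, y j * p.linear (b j))) (b.repr (x - c))) := by
      intro x
      rw [affine_coord b c p x]
      simp only [φ, ← OrthonormalBasis.repr_apply_apply]
      ring
    simp_rw [this]
    rw [integral_const_mul, int_coord b c (fun y : Euc (m+1) => S.indicator 1 (y 0) * Phi m ρ δ y * (p c + ∑ j, y j * p.linear (b j))), moment m hδ hρ S hS, mul_zero]
  · intro ω
    have hcl : IsClosed ((fun x => b.repr (x - c)) ⁻¹' bx m ρ δ) :=
      (bx_closed m ρ δ).preimage (by fun_prop)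
    have hvol : volume ((fun x => b.repr (x - c)) ⁻¹' bx m ρ δ) ≤ ENNReal.ofReal (2 * δ * (2 * ρ) ^ m) := by
      rw [← bx_vol m hδ hρ]
      have := (b.measurePreserving_repr.comp (measurePreserving_sub_right volume c)).measure_preimage
        (bx_closed m ρ δ).measurableSet.nullMeasurableSet
      exact this.le
    have := energy_le κ φ _ a _ hlip (fun x => ?_) _ hcl hvol (by positivity) (fun x hx => ?_) ω
    · refine this.trans ?_
      rw [Real.coe_toNNReal _ (by positivity)]
      have hmax : δ⁻¹ ≤ N * max R⁻¹ κ := by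
        rcases le_total ρ κ⁻¹ with h | h
        · rw [hδd, min_eq_left h, hρd, inv_div, div_eq_mul_inv]
          gcongr; exact le_max_left _ _
        · rw [hδd, min_eq_right h, inv_inv]
          calc κ ≤ max R⁻¹ κ := le_max_right _ _
            _ ≤ N * max R⁻¹ κ := le_mul_of_one_le_left (le_max_of_le_right hκ.le) hN1
      calc (a * ((m + 1) * (75 / δ))) ^ 2 * (2 * δ * (2 * ρ) ^ m) + κ ^ 2 * (a ^ 2 * (2 * δ * (2 * ρ) ^ m))
          ≤ (a * ((m + 1) * (75 / δ))) ^ 2 * (2 * δ * (2 * ρ) ^ m) + (δ⁻¹) ^ 2 * (a ^ 2 * (2 * δ * (2 * ρ) ^ m)) := by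
            gcongr
        _ = a ^ 2 * (2 * (2 * ρ) ^ m) * K * δ⁻¹ := by rw [hKd]; field_simp
        _ = ((k:ℝ)⁻¹) ^ 2 * (2 * 2 ^ m) * K * (ρ ^ m)⁻¹ * δ⁻¹ := by
            rw [ha, mul_pow 2 ρ]; field_simp
        _ = ((k:ℝ)⁻¹) ^ 2 * (2 * 2 ^ m) * K * (N ^ m * (R ^ m)⁻¹) * δ⁻¹ := by
            rw [hρd, div_pow, inv_div, div_eq_mul_inv]
        _ ≤ ((k:ℝ)⁻¹) ^ 2 * (2 * 2 ^ m) * K * (N ^ m * (R ^ m)⁻¹) * (N * max R⁻¹ κ) := by gcongr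
        _ = _ := by ring
    · show |a * _| ≤ a
      rw [abs_mul, abs_of_pos ha0]
      exact mul_le_of_le_one_right ha0.le (Phi_abs_le _ _ _ _)
    · show a * _ = 0
      simp only [bx, mem_preimage, mem_ofPred_eq, not_forall, not_le] at hx
      obtain ⟨i, hi⟩ := hx
      rw [Phi_zero_of m hδ hρ _ i hi.le, mul_zero]

lemma aff_sum {n : ℕ} {ι : Type*} (f : Euc n →ᵃ[ℝ] ℝ) (s : Finset ι) (w : ι → ℝ) (P : ι → Euc n)
    (hw : ∑ i ∈ s, w i = 1) : f (∑ i ∈ s, w i • P i) = ∑ i ∈ s, w i * f (P i) := by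
  have h : ∀ x, f x = f.linear x + f 0 := fun x => congrFun f.decomp x
  have : ∑ i ∈ s, w i * f (P i) = ∑ i ∈ s, w i * f.linear (P i) + f 0 := by
    rw [← one_mul (f 0), ← hw, Finset.sum_mul, ← Finset.sum_add_distrib]
    exact Finset.sum_congr rfl fun i _ => by rw [h (P i)]; ring
  rw [this, h]; simp

lemma mem_simT {n : ℕ} (B : AffineBasis (Fin (n+1)) ℝ (Euc n)) (x : Euc n) :
    x ∈ simT B ↔ ∀ i, 0 ≤ B.coord i x := by
  unfold simT; rw [AffineBasis.convexHull_eq_nonneg_coord]; rfl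

lemma face_coord {n : ℕ} (B : AffineBasis (Fin (n+1)) ℝ (Euc n)) (z : Fin (n+1)) (x : Euc n)
    (hx : x ∈ simFace B z) : B.coord z x = 0 := by
  have hc : Convex ℝ (B.coord z ⁻¹' {0}) := (convex_singleton (0:ℝ)).affine_preimage (B.coord z)
  refine convexHull_min ?_ hc hx
  rintro _ ⟨y, hy, rfl⟩
  simpa using B.coord_apply_ne (Ne.symm hy)

lemma vert_mem_face {n : ℕ} (B : AffineBasis (Fin (n+1)) ℝ (Euc n)) (z y : Fin (n+1)) (h : y ≠ z) :
    B y ∈ simFace B z := subset_convexHull _ _ ⟨y, h, rfl⟩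

lemma inr_nonneg {n : ℕ} (s : Set (Euc n)) : 0 ≤ inradius s :=
  Real.sSup_nonneg' ⟨0, ⟨0, by simp⟩, le_rfl⟩

lemma inr_coord {n : ℕ} (B : AffineBasis (Fin (n+1)) ℝ (Euc n)) (y : Fin (n+1)) (x x' : Euc n) :
    inradius (simT B) * |B.coord y x - B.coord y x'| ≤ 2 * ‖x - x'‖ := by
  set D := |B.coord y x - B.coord y x'| with hD
  have hD0 : 0 ≤ D := abs_nonneg _
  rcases hD0.eq_or_lt with h0 | h0
  · rw [← h0]; simp
  rw [← le_div_iff₀ h0]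
  refine csSup_le ⟨0, 0, by simp⟩ ?_
  rintro r ⟨c0, hr⟩
  rw [le_div_iff₀ h0]
  rcases le_or_gt r 0 with hr0 | hr0
  · have := mul_nonneg (neg_nonneg.2 hr0) h0.le
    have := norm_nonneg (x - x'); linarith
  have hne : 0 < ‖x - x'‖ := by
    rw [norm_pos_iff, sub_ne_zero]; rintro rfl; simp [hD] at h0
  set t := r / 2 / ‖x - x'‖ with ht
  have htp : 0 < t := by positivity
  have hle1 : ∀ w ∈ simT B, 0 ≤ B.coord y w ∧ B.coord y w ≤ 1 := by
    intro w hw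
    rw [mem_simT] at hw
    refine ⟨hw y, ?_⟩
    rw [← B.sum_coord_apply_eq_one w]
    exact Finset.single_le_sum (fun i _ => hw i) (Finset.mem_univ y)
  have h1 := hle1 c0 (hr (mem_ball_self hr0))
  have h2 := hle1 (c0 + t • (x - x')) (hr (by
    rw [mem_ball, dist_eq_norm, add_sub_cancel_left, norm_smul, Real.norm_of_nonneg htp.le, ht,
      div_mul_cancel₀ _ hne.ne']
    linarith))
  have h3 : B.coord y (c0 + t • (x - x')) = B.coord y c0 + t * (B.coord y x - B.coord y x') := by
    have h : ∀ x, B.coord y x = (B.coord y).linear x + B.coord y 0 := fun x => congrFun (B.coord y).decomp x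
    rw [h, h x, h x', h c0, map_add, map_smul, map_sub, smul_eq_mul]; ring
  have h4 : t * D ≤ 1 := by
    have e : t * D = |t * (B.coord y x - B.coord y x')| := by rw [abs_mul, abs_of_pos htp]
    rw [e, abs_le]
    constructor <;> linarith [h1.1, h1.2, h2.1, h2.2]
  rw [ht, div_mul_eq_mul_div, div_le_one hne] at h4
  linarith

def fc {n : ℕ} (B : AffineBasis (Fin (n+1)) ℝ (Euc n)) (z : Fin (n+1)) : Euc n :=
  ∑ i ∈ Finset.univ.erase z, ((n:ℝ)⁻¹) • B i

lemma wsum {n : ℕ} (hn : 0 < n) (z : Fin (n+1)) : ∑ i ∈ Finset.univ.erase z, ((n:ℝ)⁻¹) = 1 := by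
  have : (n:ℝ) ≠ 0 := by positivity
  simp [Finset.card_erase_of_mem, this]

lemma fc_mem {n : ℕ} (hn : 0 < n) (B : AffineBasis (Fin (n+1)) ℝ (Euc n)) (z : Fin (n+1)) :
    fc B z ∈ simFace B z :=
  (convex_convexHull ℝ _).sum_mem (fun _ _ => by positivity) (wsum hn z)
    (fun i hi => vert_mem_face B z i (Finset.ne_of_mem_erase hi))

lemma face_sub {n : ℕ} (B : AffineBasis (Fin (n+1)) ℝ (Euc n)) (z : Fin (n+1)) : simFace B z ⊆ simT B :=
  convexHull_mono (image_subset_range _ _)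

lemma fc_coord {n : ℕ} (hn : 0 < n) (B₁ B : AffineBasis (Fin (n+1)) ℝ (Euc n)) (z₁ z : Fin (n+1))
    (h : simFace B₁ z₁ = simFace B z) (y : Fin (n+1)) (hy : y ≠ z) : (n:ℝ)⁻¹ ≤ B.coord y (fc B₁ z₁) := by
  have hex : ∃ w ∈ Finset.univ.erase z₁, 1 ≤ B.coord y (B₁ w) := by
    by_contra hh
    push Not at hh
    have hc : Convex ℝ (B.coord y ⁻¹' (Iio 1)) := (convex_Iio (1:ℝ)).affine_preimage (B.coord y)
    have h2 : simFace B₁ z₁ ⊆ B.coord y ⁻¹' (Iio 1) := by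
      refine convexHull_min ?_ hc
      rintro _ ⟨w, hw, rfl⟩
      exact hh w (Finset.mem_erase.2 ⟨hw, Finset.mem_univ _⟩)
    have h3 := h2 (h ▸ vert_mem_face B z y hy)
    simp at h3
  obtain ⟨w, hw, h1⟩ := hex
  rw [fc, aff_sum _ _ _ _ (wsum hn z₁), ← Finset.mul_sum]
  refine le_mul_of_one_le_right (by positivity) (h1.trans ?_)
  refine Finset.single_le_sum (f := fun i => B.coord y (B₁ i)) (fun i hi => ?_) hw
  have : B₁ i ∈ simT B := face_sub B z (h ▸ vert_mem_face B₁ z₁ i (Finset.ne_of_mem_erase hi))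
  exact (mem_simT B _).1 this y

lemma coord_prop {n : ℕ} (B₁ B₂ : AffineBasis (Fin (n+1)) ℝ (Euc n)) (z₁ z₂ : Fin (n+1))
    (h : simFace B₁ z₁ = simFace B₂ z₂) (x : Euc n) :
    B₂.coord z₂ x = B₂.coord z₂ (B₁ z₁) * B₁.coord z₁ x := by
  have h1 : B₂.coord z₂ x = ∑ i, B₁.coord i x * B₂.coord z₂ (B₁ i) := by
    rw [← aff_sum _ _ _ _ (B₁.sum_coord_apply_eq_one x), B₁.linear_combination_coord_eq_self]
  rw [h1, Finset.sum_eq_single z₁]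
  · ring
  · intro i _ hi
    rw [face_coord B₂ z₂ _ (h ▸ vert_mem_face B₁ z₁ i hi), mul_zero]
  · simp

lemma coord_neg {n : ℕ} (hn : 0 < n) (B₁ B₂ : AffineBasis (Fin (n+1)) ℝ (Euc n)) (z₁ z₂ : Fin (n+1))
    (h : simFace B₁ z₁ = simFace B₂ z₂) (hd : interior (simT B₁) ∩ interior (simT B₂) = ∅) :
    B₂.coord z₂ (B₁ z₁) < 0 := by
  have hk := coord_prop B₁ B₂ z₁ z₂ h
  set k := B₂.coord z₂ (B₁ z₁)
  by_contra hh
  have hk0 : k ≠ 0 := by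
    intro h0
    have := hk (B₂ z₂)
    simp [h0] at this
  have hkp : 0 < k := lt_of_le_of_ne (not_lt.1 hh) hk0.symm
  set c := fc B₁ z₁ with hc
  let X : ℝ → Euc n := fun t => AffineMap.lineMap c (B₁ z₁) t
  have hX : Continuous X := AffineMap.lineMap_continuous
  have hX0 : X 0 = c := by simp [X]
  have hz : ∀ t, B₁.coord z₁ (X t) = t := by
    intro t
    have := AffineMap.apply_lineMap (B₁.coord z₁) c (B₁ z₁) t
    rw [face_coord B₁ z₁ c (fc_mem hn B₁ z₁)] at this
    rw [B₁.coord_apply_eq] at this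
    refine this.trans ?_
    simp [AffineMap.lineMap_apply]
  have gen : ∀ (B : AffineBasis (Fin (n+1)) ℝ (Euc n)) (z : Fin (n+1)), simFace B₁ z₁ = simFace B z →
      ∀ᶠ t in nhdsWithin (0:ℝ) (Ioi 0), ∀ y, y ≠ z → 0 < B.coord y (X t) := by
    intro B z hB
    refine Filter.Eventually.filter_mono nhdsWithin_le_nhds ?_
    rw [Filter.eventually_all]
    intro y
    by_cases hy : y = z
    · simp [hy]
    · have hcont : Continuous fun t => B.coord y (X t) :=
        (AffineMap.continuous_of_finiteDimensional (B.coord y)).comp hX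
      have h0 : 0 < B.coord y (X 0) := by
        rw [hX0]; exact lt_of_lt_of_le (by positivity) (fc_coord hn B₁ B z₁ z hB y hy)
      filter_upwards [hcont.continuousAt.eventually (lt_mem_nhds h0)] with t ht _ using ht
  obtain ⟨t, ⟨h1, h2⟩, ht⟩ := ((gen B₁ z₁ rfl).and (gen B₂ z₂ h)).and (self_mem_nhdsWithin) |>.exists
  have ht : 0 < t := ht
  have m1 : X t ∈ interior (simT B₁) := by
    unfold simT; rw [AffineBasis.interior_convexHull]
    intro i
    by_cases hi : i = z₁
    · rw [hi, hz]; exact ht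
    · exact h1 i hi
  have m2 : X t ∈ interior (simT B₂) := by
    unfold simT; rw [AffineBasis.interior_convexHull]
    intro i
    by_cases hi : i = z₂
    · rw [hi, hk, hz]; positivity
    · exact h2 i hi
  have : X t ∈ interior (simT B₁) ∩ interior (simT B₂) := ⟨m1, m2⟩
  rw [hd] at this; exact this

lemma simT_bdd {n : ℕ} (B : AffineBasis (Fin (n+1)) ℝ (Euc n)) : Bornology.IsBounded (simT B) :=
  isBounded_convexHull.2 (Set.finite_range _).isBounded

lemma inr_le_diam {n : ℕ} (hn : 2 ≤ n) (B : AffineBasis (Fin (n+1)) ℝ (Euc n)) (z : Fin (n+1))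
    (T : Set (Euc n)) (hT : Bornology.IsBounded T) (h : simFace B z ⊆ T) :
    inradius (simT B) ≤ 2 * diam T ∧ 0 < diam T := by
  obtain ⟨y, hy, y', hy', hne⟩ : ∃ y ∈ Finset.univ.erase z, ∃ y' ∈ Finset.univ.erase z, y ≠ y' := by
    rw [← Finset.one_lt_card]
    · simp [Finset.card_erase_of_mem]; omega
  have m1 := h (vert_mem_face B z y (Finset.ne_of_mem_erase hy))
  have m2 := h (vert_mem_face B z y' (Finset.ne_of_mem_erase hy'))
  have h1 := inr_coord B y (B y) (B y')
  rw [B.coord_apply_eq, B.coord_apply_ne hne] at h1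
  have h2 := dist_le_diam_of_mem hT m1 m2
  rw [dist_eq_norm] at h2
  have h3 : 0 < ‖B y - B y'‖ := by
    rw [norm_pos_iff, sub_ne_zero]; exact fun e => hne (B.ind.injective e)
  simp at h1
  exact ⟨by linarith, by linarith⟩

lemma near_coord {n : ℕ} (hn : 0 < n) (B₁ B : AffineBasis (Fin (n+1)) ℝ (Euc n)) (z₁ z : Fin (n+1))
    (h : simFace B₁ z₁ = simFace B z) (R : ℝ) (hR : 2 * n * R ≤ inradius (simT B)) (hR0 : 0 < R) (x : Euc n)
    (hx : x ∈ ball (fc B₁ z₁) R) : x ∈ simT B ↔ 0 ≤ B.coord z x := by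
  rw [mem_simT]
  refine ⟨fun h => h z, fun hz y => ?_⟩
  by_cases hy : y = z
  · rw [hy]; exact hz
  have h1 := fc_coord hn B₁ B z₁ z h y hy
  have h2 := inr_coord B y x (fc B₁ z₁)
  rw [mem_ball, dist_eq_norm] at hx
  have hn' : (0:ℝ) < n := by positivity
  by_contra hh
  push Not at hh
  have h3 : (n:ℝ)⁻¹ ≤ |B.coord y x - B.coord y (fc B₁ z₁)| := by
    rw [abs_sub_comm]; exact le_trans (by linarith) (le_abs_self _)
  have h4 : 2 * n * R * (n:ℝ)⁻¹ ≤ inradius (simT B) * |B.coord y x - B.coord y (fc B₁ z₁)| := by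
    have := inr_nonneg (simT B)
    gcongr
  have h5 : 2 * n * R * (n:ℝ)⁻¹ = 2 * R := by field_simp
  linarith

lemma geom (m : ℕ) (hm : 1 ≤ m) (μ : ℝ) : ∃ K : ℝ, 1 ≤ K ∧
      ∀ B₁ B₂ : AffineBasis (Fin (m + 1 + 1)) ℝ (Euc (m+1)),
        interior (simT B₁) ∩ interior (simT B₂) = ∅ →
        Metric.diam (simT B₁) ≤ μ * inradius (simT B₁) →
        Metric.diam (simT B₂) ≤ μ * inradius (simT B₂) →
        ∀ z₁ z₂ : Fin (m + 1 + 1),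
          simT B₁ ∩ simT B₂ = simFace B₁ z₁ →
          simT B₁ ∩ simT B₂ = simFace B₂ z₂ →
          0 < max (Metric.diam (simT B₁)) (Metric.diam (simT B₂)) ∧
          ∃ c : Euc (m+1), ∃ b : OrthonormalBasis (Fin (m+1)) ℝ (Euc (m+1)),
            c ∈ simT B₁ ∧
            (∀ x ∈ simT B₁ ∩ simT B₂, ⟪b 0, x - c⟫ = 0) ∧
            (∀ x ∈ ball c (max (Metric.diam (simT B₁)) (Metric.diam (simT B₂)) / K),
              (x ∈ simT B₁ ↔ 0 ≤ ⟪b 0, x - c⟫) ∧ (x ∈ simT B₂ ↔ ⟪b 0, x - c⟫ ≤ 0)) := by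
  refine ⟨2 * (m + 1) * (|μ| + 2 * μ ^ 2 + 1), ?_, ?_⟩
  · have h0 : (0:ℝ) ≤ m := Nat.cast_nonneg m
    have h1 : (0:ℝ) ≤ |μ| + 2 * μ ^ 2 := by positivity
    nlinarith
  intro B₁ B₂ hint hd1 hd2 z₁ z₂ hf1 hf2
  have hF : simFace B₁ z₁ = simFace B₂ z₂ := hf1.symm.trans hf2
  have s12 : simFace B₁ z₁ ⊆ simT B₂ := hF ▸ face_sub B₂ z₂
  have s21 : simFace B₂ z₂ ⊆ simT B₁ := hF ▸ face_sub B₁ z₁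
  obtain ⟨r12, D2⟩ := inr_le_diam (by omega) B₁ z₁ _ (simT_bdd B₂) s12
  obtain ⟨r21, D1⟩ := inr_le_diam (by omega) B₂ z₂ _ (simT_bdd B₁) s21
  have hr1 := inr_nonneg (simT B₁)
  have hr2 := inr_nonneg (simT B₂)
  set D₁ := diam (simT B₁)
  set D₂ := diam (simT B₂)
  set r₁ := inradius (simT B₁) with hr1d
  set r₂ := inradius (simT B₂) with hr2d
  have hμ : 0 < μ := by
    by_contra hh
    have := mul_nonneg (neg_nonneg.2 (not_lt.1 hh)) hr1
    linarith
  have hm0 : (0:ℝ) ≤ m := Nat.cast_nonneg m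
  refine ⟨lt_max_of_lt_left D1, ?_⟩
  rw [abs_of_pos hμ]
  set h := max D₁ D₂ with hh
  have hh0 : 0 < h := lt_max_of_lt_left D1
  have hle1 : h ≤ (μ + 2 * μ ^ 2 + 1) * r₁ := by
    apply max_le
    · nlinarith [mul_nonneg (sq_nonneg μ) hr1]
    · have : μ * r₂ ≤ μ * (2 * (μ * r₁)) := by gcongr; linarith
      nlinarith [mul_nonneg hμ.le hr1]
  have hle2 : h ≤ (μ + 2 * μ ^ 2 + 1) * r₂ := by
    apply max_le
    · have : μ * r₁ ≤ μ * (2 * (μ * r₂)) := by gcongr; linarith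
      nlinarith [mul_nonneg hμ.le hr2]
    · nlinarith [mul_nonneg (sq_nonneg μ) hr2]
  set R := h / (2 * (m + 1) * (μ + 2 * μ ^ 2 + 1)) with hR
  have hR0 : 0 < R := by positivity
  have hRe : 2 * ((m + 1 : ℕ):ℝ) * R = h / (μ + 2 * μ ^ 2 + 1) := by
    rw [hR]; push_cast; field_simp
  have hR1 : 2 * ((m + 1 : ℕ):ℝ) * R ≤ r₁ := by
    rw [hRe, div_le_iff₀ (by positivity)]; linarith
  have hR2 : 2 * ((m + 1 : ℕ):ℝ) * R ≤ r₂ := by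
    rw [hRe, div_le_iff₀ (by positivity)]; linarith
  set c := fc B₁ z₁ with hc
  have hcm : c ∈ simFace B₁ z₁ := fc_mem (by omega) B₁ z₁
  have hk := coord_prop B₁ B₂ z₁ z₂ hF
  have hkn := coord_neg (by omega) B₁ B₂ z₁ z₂ hF hint
  set k := B₂.coord z₂ (B₁ z₁)
  -- the normal vector
  let ℓ : Euc (m+1) →L[ℝ] ℝ := LinearMap.toContinuousLinearMap (B₁.coord z₁).linear
  let v : Euc (m+1) := (InnerProductSpace.toDual ℝ (Euc (m+1))).symm ℓ
  have hv : ∀ x, B₁.coord z₁ x = ⟪v, x - c⟫ := by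
    intro x
    have h1 : ⟪v, x - c⟫ = ℓ (x - c) := InnerProductSpace.toDual_symm_apply
    rw [h1]
    have h2 : ℓ (x - c) = B₁.coord z₁ x - B₁.coord z₁ c := by
      have := (B₁.coord z₁).linearMap_vsub x c
      exact this
    rw [h2, face_coord B₁ z₁ c hcm, sub_zero]
  have hv0 : v ≠ 0 := by
    intro h0
    have := hv (B₁ z₁)
    simp [h0] at this
  have hvn : 0 < ‖v‖ := norm_pos_iff.2 hv0
  obtain ⟨b, hb⟩ : ∃ b : OrthonormalBasis (Fin (m+1)) ℝ (Euc (m+1)), b 0 = ‖v‖⁻¹ • v := by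
    have hon : Orthonormal ℝ (({0} : Set (Fin (m+1))).domRestrict fun _ => ‖v‖⁻¹ • v) := by
      constructor
      · intro i; simp [norm_smul, hvn.ne']
      · intro i j hij; exact absurd (Subsingleton.elim i j) hij
    obtain ⟨b, hb⟩ := hon.exists_orthonormalBasis_extension_of_card_eq (by simp)
    exact ⟨b, hb 0 rfl⟩
  have hcoord : ∀ x, B₁.coord z₁ x = ‖v‖ * ⟪b 0, x - c⟫ := by
    intro x
    rw [hv, hb, real_inner_smul_left]; field_simp
  refine ⟨c, b, face_sub B₁ z₁ hcm, ?_, ?_⟩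
  · intro x hx
    rw [hf1] at hx
    have := hcoord x
    rw [face_coord B₁ z₁ x hx] at this
    exact (mul_eq_zero.1 this.symm).resolve_left hvn.ne'
  · intro x hx
    constructor
    · rw [near_coord (by omega) B₁ B₁ z₁ z₁ rfl R hR1 hR0 x hx, hcoord]
      exact mul_nonneg_iff_of_pos_left hvn
    · rw [near_coord (by omega) B₁ B₂ z₁ z₂ hF R hR2 hR0 x hx, hk, hcoord, ← mul_assoc]
      constructor
      · intro hh; by_contra h3; push Not at h3
        have := mul_neg_of_neg_of_pos (mul_neg_of_neg_of_pos hkn hvn) h3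
        linarith
      · intro hh
        exact mul_nonneg_of_nonpos_of_nonpos (mul_neg_of_neg_of_pos hkn hvn).le hh

/-- the face dual function: duality with the face Dirac distribution,
orthogonality to elementwise affine functions, and robust energy bound. For two
simplices `T₁, T₂` with disjoint interiors sharing the common face `F = T₁ ∩ T₂`, each
with shape parameter `≤ μ`, there is a Lipschitz function `φ*_F` vanishing outside
`ω_F = int (T₁ ∪ T₂)` with `∫_F φ*_F dH^{d−1} = 1`, `∫_{Tᵢ} φ*_F p = 0` for every affine
`p`, and `‖φ*_F‖_{E,ω_F} ≤ C |F|^{-1/2} max{h⁻¹, κ}^{1/2}` with `C = C(d, μ)`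
independent of `κ`. -/
theorem face_dual_function_exists (d : ℕ) (hd : 2 ≤ d) (μ : ℝ) :
    ∃ C : ℝ, 0 < C ∧ ∀ κ : ℝ, 0 < κ →
      ∀ B₁ B₂ : AffineBasis (Fin (d + 1)) ℝ (Euc d),
        interior (simT B₁) ∩ interior (simT B₂) = ∅ →
        Metric.diam (simT B₁) ≤ μ * inradius (simT B₁) →
        Metric.diam (simT B₂) ≤ μ * inradius (simT B₂) →
        ∀ z₁ z₂ : Fin (d + 1),
          simT B₁ ∩ simT B₂ = simFace B₁ z₁ →
          simT B₁ ∩ simT B₂ = simFace B₂ z₂ →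
          ∃ φs : Euc d → ℝ,
            (∃ L : ℝ≥0, LipschitzWith L φs) ∧
            (∀ x ∉ interior (simT B₁ ∪ simT B₂), φs x = 0) ∧
            (∫ x in simT B₁ ∩ simT B₂, φs x ∂(μH[(d : ℝ) - 1])) = 1 ∧
            (∀ p : Euc d →ᵃ[ℝ] ℝ,
              (∫ x in simT B₁, φs x * p x) = 0 ∧ (∫ x in simT B₂, φs x * p x) = 0) ∧
            Real.sqrt (energySq κ (interior (simT B₁ ∪ simT B₂)) φs)
              ≤ C * (μH[(d : ℝ) - 1] (simT B₁ ∩ simT B₂)).toReal ^ (-(1 / 2 : ℝ))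
                  * Real.sqrt (max (max (Metric.diam (simT B₁))
                      (Metric.diam (simT B₂)))⁻¹ κ) := by
  obtain ⟨m, rfl⟩ : ∃ m, d = m + 1 := ⟨d - 1, by omega⟩
  have hcast : (((m + 1 : ℕ) : ℝ) - 1) = (m : ℝ) := by push_cast; ring
  rw [hcast]
  obtain ⟨K, hK1, hgeom⟩ := geom m (by omega) μ
  obtain ⟨C0, hC0, han⟩ := analytic m
  set C1 : ℝ := (μH[(m:ℝ)] (ball (0 : Euc m) 1)).toReal with hC1d
  have hK0 : 0 < K := by linarith
  have hfin : μH[(m:ℝ)] (ball (0 : Euc m) 1) ≠ ⊤ := measure_ball_lt_top.ne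
  have hC1 : 0 < C1 := ENNReal.toReal_pos (measure_ball_pos _ _ one_pos).ne' hfin
  refine ⟨Real.sqrt (C0 * (K ^ m * K) * C1), by positivity, ?_⟩
  intro κ hκ B₁ B₂ hint hd1 hd2 z₁ z₂ hf1 hf2
  obtain ⟨hh0, c, b, hc, hFH, hball⟩ := hgeom B₁ B₂ hint hd1 hd2 z₁ z₂ hf1 hf2
  set h := max (diam (simT B₁)) (diam (simT B₂)) with hh
  have hR : 0 < h / K := by positivity
  obtain ⟨φ, hL, hsupp, hface, hmom, hen⟩ := han κ hκ (h / K) hR c b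
  have hcl : ∀ B : AffineBasis (Fin (m+1+1)) ℝ (Euc (m+1)), MeasurableSet (simT B) := fun B =>
    ((Set.finite_range B).isCompact_convexHull ℝ).isClosed.measurableSet
  have hclH : MeasurableSet {x : Euc (m+1) | ⟪b 0, x - c⟫ = 0} :=
    (isClosed_eq (by fun_prop) continuous_const).measurableSet
  have hfaceF : (∫ x in simT B₁ ∩ simT B₂, φ x ∂(μH[(m : ℝ)])) = 1 := by
    rw [← hface]
    symm
    apply setIntegral_eq_of_subset_of_forall_sdiff_eq_zero hclH
    · exact fun x hx => hFH x hx
    · intro x hx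
      apply hsupp
      intro hxb
      have h0 : ⟪b 0, x - c⟫ = 0 := hx.1
      exact hx.2 ⟨((hball x hxb).1).2 h0.ge, ((hball x hxb).2).2 h0.le⟩
  refine ⟨φ, hL, ?_, hfaceF, ?_, ?_⟩
  · intro x hx
    apply hsupp
    intro hxb
    apply hx
    refine mem_interior.2 ⟨ball c (h / K), ?_, isOpen_ball, hxb⟩
    intro y hy
    rcases le_total 0 ⟪b 0, y - c⟫ with h1 | h1
    · exact Or.inl ((hball y hy).1.2 h1)
    · exact Or.inr ((hball y hy).2.2 h1)
  · intro p
    have gen : ∀ (B : AffineBasis (Fin (m+1+1)) ℝ (Euc (m+1))) (S : Set ℝ), (S = Ici 0 ∨ S = Iic 0) →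
        (∀ x ∈ ball c (h / K), (x ∈ simT B ↔ ⟪b 0, x - c⟫ ∈ S)) → ∫ x in simT B, φ x * p x = 0 := by
      intro B S hS hB
      rw [← integral_indicator (hcl B), ← hmom S hS p]
      congr 1
      ext x
      by_cases hx : x ∈ ball c (h / K)
      · by_cases h1 : x ∈ simT B
        · simp [h1, (hB x hx).1 h1]
        · have : ⟪b 0, x - c⟫ ∉ S := fun h2 => h1 ((hB x hx).2 h2)
          rw [Set.indicator_of_notMem h1, Set.indicator_of_notMem this]; simp
      · simp [hsupp x hx, Set.indicator]
    exact ⟨gen B₁ (Ici 0) (Or.inl rfl) fun x hx => (hball x hx).1,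
      gen B₂ (Iic 0) (Or.inr rfl) fun x hx => (hball x hx).2⟩
  · set f := (μH[(m : ℝ)] (simT B₁ ∩ simT B₂)).toReal with hf
    have hsub : simT B₁ ∩ simT B₂ ⊆ closedBall c h := by
      intro x hx
      exact (dist_le_diam_of_mem (simT_bdd B₁) hx.1 hc).trans (le_max_left _ _)
    have hle := hyper_meas_le b c h hh0.le _ (fun x hx => hFH x hx) hsub
    have hprod : ENNReal.ofReal (h ^ m) * μH[(m:ℝ)] (ball (0 : Euc m) 1) ≠ ⊤ :=
      ENNReal.mul_ne_top ENNReal.ofReal_ne_top hfin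
    have hfle : f ≤ h ^ m * C1 := by
      have := ENNReal.toReal_mono hprod hle
      rwa [ENNReal.toReal_mul, ENNReal.toReal_ofReal (by positivity)] at this
    have hf0 : 0 < f := by
      refine ENNReal.toReal_pos ?_ (ne_top_of_le_ne_top hprod hle)
      intro h0
      rw [Measure.restrict_eq_zero.2 h0] at hfaceF
      simp at hfaceF
    have hrw : f ^ (-(1 / 2 : ℝ)) = Real.sqrt f⁻¹ := by
      rw [Real.rpow_neg hf0.le, Real.sqrt_inv, Real.sqrt_eq_rpow]
    rw [hrw, ← Real.sqrt_mul (by positivity), ← Real.sqrt_mul (by positivity)]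
    apply Real.sqrt_le_sqrt
    refine (hen _).trans ?_
    have hM0 : 0 < max h⁻¹ κ := lt_max_of_lt_right hκ
    have e1 : max (h / K)⁻¹ κ ≤ K * max h⁻¹ κ := by
      apply max_le
      · rw [inv_div, div_eq_mul_inv]; gcongr; exact le_max_left _ _
      · calc κ ≤ max h⁻¹ κ := le_max_right _ _
          _ ≤ K * max h⁻¹ κ := le_mul_of_one_le_left hM0.le hK1
    have e2 : ((h / K) ^ m)⁻¹ ≤ K ^ m * (C1 * f⁻¹) := by
      rw [div_pow, inv_div, div_eq_mul_inv]
      gcongr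
      rw [inv_le_iff_one_le_mul₀ (by positivity), mul_right_comm, ← div_eq_mul_inv, one_le_div hf0]
      linarith
    calc C0 * ((h / K) ^ m)⁻¹ * max (h / K)⁻¹ κ
        ≤ C0 * (K ^ m * (C1 * f⁻¹)) * (K * max h⁻¹ κ) := by gcongr
      _ = _ := by ring
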